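/- arXiv:1910.08871 — 3 statements merged into one kernel-verified Lean document; each statement's English description precedes it below -/
import Mathlib

section
/- Let d ≥ 1 be such that θ^(d) = π^{d/2}/Γ(d/2+1) ≥ 1, let p ∈ [1,∞], N ≥ 1, n = N^d, and r > 0. Let D_n be the grid of n points in the torus 𝕋^d whose coordinates are multiples of 1/N, equipped with the ℓ_p quotient metric, and set a_n = θ^(d) n r^d. Then the degree a'_n = #{ y ∈ D_n : y ≠ g, dist_p(g,y) ≤ r } of any grid point g in the deterministic geometric graph G(D_n, r) satisfies a'_n ≤ d^{1/p} · 2^d · a_n · (1 + 1/(2 a_n^{1/d}))^d (with the convention d^{1/∞} = 1). -/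
/-!
Since `p ≥ 1`, the `ℓ_p` distance dominates every coordinate distance, so a neighbour of `g` has
each coordinate within circle distance `r` of that of `g`. Two multiples of `1/N` at circle distance
at most `r` differ by `k/N` with `|k| ≤ ⌊N r⌋`, which leaves at most `2 N r + 1` choices per
coordinate and bounds the degree by `(2 N r + 1)^d` (`card_grid_ball_le`).

As `θ^(d) ≥ 1`, `N r ≤ b` where `b = a_n^{1/d}`, and `(2 b + 1)^d = 2^d a_n (1 + 1/(2 b))^d`.
The factor `d^{1/p} ≥ 1` only weakens the bound.
-/

open MeasureTheory ProbabilityTheory Real Filter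
open scoped ENNReal Classical BigOperators

noncomputable section

/-- The `d`-dimensional unit torus `(ℝ/ℤ)^d`. -/
abbrev Torus (d : ℕ) : Type := Fin d → AddCircle (1 : ℝ)

/-- The quotient `ℓ_p` metric on the torus, `p ∈ [1,∞]`. -/
noncomputable def torusDist (d : ℕ) (p : ℝ≥0∞) (x y : Torus d) : ℝ :=
  if p = ⊤ then ⨆ s, ‖x s - y s‖
  else (∑ s, ‖x s - y s‖ ^ p.toReal) ^ (1 / p.toReal)

/-- `θ^(d) = π^{d/2} / Γ(d/2 + 1)`. -/
noncomputable def thetaBall (d : ℕ) : ℝ := Real.pi ^ ((d : ℝ) / 2) / Real.Gamma ((d : ℝ) / 2 + 1)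

/-- The grid point of `𝕋^d` with coordinates `v s / N`. -/
noncomputable def gridPt (d N : ℕ) (v : Fin d → Fin N) : Torus d :=
  fun s => (((v s : ℕ) : ℝ) / (N : ℝ) : ℝ)

/-- The grid `D_n ⊂ 𝕋^d` of the `n = N^d` points whose coordinates are multiples of `1/N`. -/
noncomputable def gridFinset (d N : ℕ) : Finset (Torus d) :=
  Finset.image (gridPt d N) Finset.univ

/-- `d^{1/p}` for `p ∈ [1,∞]`, with the convention `d^{1/∞} = 1`. -/
noncomputable def dPow (d : ℕ) (p : ℝ≥0∞) : ℝ :=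
  if p = ⊤ then 1 else (d : ℝ) ^ (1 / p.toReal)

/-- Each coordinate difference is bounded by the `ℓ_p` distance, for every `p ∈ [1,∞]`. -/
lemma norm_coord_le_torusDist (d : ℕ) (p : ℝ≥0∞) (hp : 1 ≤ p) (x y : Torus d) (s : Fin d) :
    ‖x s - y s‖ ≤ torusDist d p x y := by
  unfold torusDist
  split_ifs with h
  · exact le_ciSup (f := fun s => ‖x s - y s‖) (Set.finite_range _).bddAbove s
  · have hp0 : 0 < p.toReal := ENNReal.toReal_pos (by positivity) h
    have h1 : ‖x s - y s‖ ^ p.toReal ≤ ∑ t, ‖x t - y t‖ ^ p.toReal :=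
      Finset.single_le_sum (f := fun t => ‖x t - y t‖ ^ p.toReal)
        (fun t _ => by positivity) (Finset.mem_univ s)
    calc ‖x s - y s‖ = (‖x s - y s‖ ^ p.toReal) ^ (1 / p.toReal) := by
          rw [one_div, Real.rpow_rpow_inv (norm_nonneg _) hp0.ne']
      _ ≤ _ := Real.rpow_le_rpow (by positivity) h1 (by positivity)

/-- Two multiples of `1/N` on the circle at distance at most `r` differ by `k/N` for an
integer `k` with `|k| ≤ ⌊N r⌋`. -/
lemma exists_offset (N : ℕ) (hN : 1 ≤ N) (r : ℝ) (i j : ℕ)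
    (h : ‖(((i : ℝ) / N : ℝ) : AddCircle (1 : ℝ)) - (((j : ℝ) / N : ℝ) : AddCircle (1 : ℝ))‖ ≤ r) :
    ∃ k ∈ Finset.Icc (-⌊(N : ℝ) * r⌋) ⌊(N : ℝ) * r⌋,
      (((i : ℝ) / N : ℝ) : AddCircle (1 : ℝ)) + (((k : ℝ) / N : ℝ) : AddCircle (1 : ℝ))
        = (((j : ℝ) / N : ℝ) : AddCircle (1 : ℝ)) := by
  have hN0 : (0 : ℝ) < N := by exact_mod_cast hN
  rw [← AddCircle.coe_sub, AddCircle.norm_eq] at h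
  simp only [inv_one, one_mul, mul_one] at h
  -- `k` is the representative of `j - i` modulo `N` of least absolute value
  set m : ℤ := round ((i : ℝ) / N - (j : ℝ) / N) with hm
  have hk : (i : ℝ) / N - (j : ℝ) / N - m = -(((j - i + m * N : ℤ) : ℝ) / N) := by
    push_cast
    field_simp
    ring
  rw [hk, abs_neg, abs_div, abs_of_pos hN0, div_le_iff₀ hN0, mul_comm r, abs_le] at h
  refine ⟨j - i + m * N, Finset.mem_Icc.2 ⟨?_, Int.le_floor.2 h.2⟩, ?_⟩
  · rw [neg_le]
    apply Int.le_floor.2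
    rw [Int.cast_neg]
    linarith [h.1]
  · have e : (i : ℝ) / N + ((j - i + m * N : ℤ) : ℝ) / N = (j : ℝ) / N + m • (1 : ℝ) := by
      push_cast
      simp only [zsmul_eq_mul]
      field_simp
      ring
    rw [← AddCircle.coe_add, e, AddCircle.coe_add, AddCircle.coe_zsmul, AddCircle.coe_period,
      smul_zero, add_zero]

/-- The grid points at `ℓ_p` distance at most `r` from a given one lie in a product of `d` arithmetic
progressions with at most `2 N r + 1` terms each. -/
lemma card_grid_ball_le (d N : ℕ) (p : ℝ≥0∞) (hp : 1 ≤ p) (hN : 1 ≤ N) (r : ℝ) (hr : 0 < r)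
    (g : Torus d) (hg : g ∈ gridFinset d N) :
    (((gridFinset d N).filter (fun y => y ≠ g ∧ torusDist d p g y ≤ r)).card : ℝ)
      ≤ (2 * ((N : ℝ) * r) + 1) ^ d := by
  have hN0 : (0 : ℝ) < N := by exact_mod_cast hN
  set f : ℤ := ⌊(N : ℝ) * r⌋ with hf
  have hf0 : 0 ≤ f := Int.floor_nonneg.2 (by positivity)
  have hfle : (f : ℝ) ≤ N * r := Int.floor_le _
  have hsub : (gridFinset d N).filter (fun y => y ≠ g ∧ torusDist d p g y ≤ r) ⊆
      Fintype.piFinset (fun s => (Finset.Icc (-f) f).image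
        (fun k : ℤ => g s + (((k : ℝ) / N : ℝ) : AddCircle (1 : ℝ)))) := by
    intro y hy
    obtain ⟨hyD, -, hdist⟩ := Finset.mem_filter.1 hy
    obtain ⟨v, -, rfl⟩ := Finset.mem_image.1 hg
    obtain ⟨w, -, rfl⟩ := Finset.mem_image.1 hyD
    refine Fintype.mem_piFinset.2 fun s => Finset.mem_image.2 ?_
    have hs : ‖gridPt d N v s - gridPt d N w s‖ ≤ r :=
      (norm_coord_le_torusDist d p hp (gridPt d N v) (gridPt d N w) s).trans hdist
    obtain ⟨k, hk, hkeq⟩ := exists_offset N hN r (v s) (w s) hs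
    exact ⟨k, hk, hkeq⟩
  have hIcc : ((Finset.Icc (-f) f).card : ℝ) = 2 * f + 1 := by
    have h : ((Finset.Icc (-f) f).card : ℤ) = 2 * f + 1 := by
      rw [Int.card_Icc]
      omega
    exact_mod_cast h
  calc (((gridFinset d N).filter (fun y => y ≠ g ∧ torusDist d p g y ≤ r)).card : ℝ)
      ≤ ∏ s : Fin d, (((Finset.Icc (-f) f).image
          (fun k : ℤ => g s + (((k : ℝ) / N : ℝ) : AddCircle (1 : ℝ)))).card : ℝ) := by
        have h := Finset.card_le_card hsub
        rw [Fintype.card_piFinset] at h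
        exact_mod_cast h
    _ ≤ ∏ _s : Fin d, (2 * ((N : ℝ) * r) + 1) := by
        refine Finset.prod_le_prod (fun _ _ => by positivity) fun s _ => ?_
        have h := Finset.card_image_le (s := Finset.Icc (-f) f)
          (f := fun k : ℤ => g s + (((k : ℝ) / N : ℝ) : AddCircle (1 : ℝ)))
        have h' : (((Finset.Icc (-f) f).image
          (fun k : ℤ => g s + (((k : ℝ) / N : ℝ) : AddCircle (1 : ℝ)))).card : ℝ)
            ≤ ((Finset.Icc (-f) f).card : ℝ) := by exact_mod_cast h
        linarith
    _ = (2 * ((N : ℝ) * r) + 1) ^ d := by simp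

lemma one_le_dPow (d : ℕ) (hd : 1 ≤ d) (p : ℝ≥0∞) : 1 ≤ dPow d p := by
  unfold dPow
  split_ifs
  · exact le_rfl
  · exact Real.one_le_rpow (by exact_mod_cast hd) (by positivity)

/-- Paper's Lemma 1: for `p ∈ [1,∞]` and `θ^(d) ≥ 1`, the vertex degree `a'_n` of any
grid point in the `ℓ_p` deterministic geometric graph `G(D_n, r)` on the grid of
`n = N^d` points satisfies `a'_n ≤ d^{1/p} 2^d a_n (1 + 1/(2 a_n^{1/d}))^d`, where
`a_n = θ^(d) n r^d`. -/
theorem grid_degree_upper_bound (d N : ℕ) (hd : 1 ≤ d) (hθ : 1 ≤ thetaBall d)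
    (p : ℝ≥0∞) (hp : 1 ≤ p) (hN : 1 ≤ N) (r : ℝ) (hr : 0 < r)
    (g : Torus d) (hg : g ∈ gridFinset d N)
    (an : ℝ) (han : an = thetaBall d * ((N : ℝ) ^ d) * r ^ d) :
    (((gridFinset d N).filter (fun y => y ≠ g ∧ torusDist d p g y ≤ r)).card : ℝ)
      ≤ dPow d p * 2 ^ d * an * (1 + 1 / (2 * an ^ ((1 : ℝ) / d))) ^ d := by
  have hd0 : d ≠ 0 := by omega
  have hN0 : (0 : ℝ) < N := by exact_mod_cast hN
  have hNr : 0 < (N : ℝ) * r := by positivity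
  have han' : ((N : ℝ) * r) ^ d ≤ an := by
    rw [han, mul_assoc, ← mul_pow]
    exact le_mul_of_one_le_left (by positivity) hθ
  have han0 : 0 < an := lt_of_lt_of_le (by positivity) han'
  set b : ℝ := an ^ ((1 : ℝ) / d) with hb
  have hbd : b ^ d = an := by
    rw [hb, one_div, Real.rpow_inv_natCast_pow han0.le hd0]
  have hb0 : 0 < b := Real.rpow_pos_of_pos han0 _
  have hle : (N : ℝ) * r ≤ b := le_of_pow_le_pow_left₀ hd0 hb0.le (hbd ▸ han')
  calc (((gridFinset d N).filter (fun y => y ≠ g ∧ torusDist d p g y ≤ r)).card : ℝ)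
      ≤ (2 * ((N : ℝ) * r) + 1) ^ d := card_grid_ball_le d N p hp hN r hr g hg
    _ ≤ (2 * b + 1) ^ d := by gcongr
    _ ≤ dPow d p * (2 * b + 1) ^ d :=
        le_mul_of_one_le_left (by positivity) (one_le_dPow d hd p)
    _ = dPow d p * 2 ^ d * an * (1 + 1 / (2 * b)) ^ d := by
        rw [← hbd, mul_assoc, mul_assoc, ← mul_pow, ← mul_pow]
        congr 2
        field_simp

end
end

section
/- Let A and B be two n×n real symmetric matrices with entries in {0,1} and with zero diagonal. Then the cube of the Levy distance between their empirical spectral distributions satisfies L(F_A, F_B)^3 ≤ (1/n)·( Σ_{i,j} A_{ij} + Σ_{i,j} B_{ij} − 2 Σ_{i,j} A_{ij} B_{ij} ). In particular, for points x_1,…,x_n ∈ 𝕋^d with adjacency matrix A(X_n) of the geometric graph of radius r and grid points x'_1,…,x'_n (an enumeration of D_n) with adjacency matrix A(D_n), one has L(v_n, v'_n)^3 ≤ (1/n) Σ_i N(x_i) + a'_n − (2/n) Σ_i N(x_i, x'_i), where N(x_i) is the degree of x_i in G(X_n, r), a'_n is the common degree of the grid graph G(D_n, r), and N(x_i, x'_i)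 = #{ j : dist_p(x_i,x_j) ≤ r, j ≠ i, and dist_p(x'_i,x'_j) ≤ r, j ≠ i } counts common neighbors. -/
/-!
Let `u i` and `v j` be orthonormal eigenbases of `A` and `B`, with eigenvalues `λ i` and `μ j`.
The matrix `W i j = ⟪u i, v j⟫ ^ 2` is doubly stochastic, and since `⟪u i, (A - B) v j⟫` equals
`(λ i - μ j) * ⟪u i, v j⟫`, orthogonal invariance of the Frobenius norm gives
`∑ i j, W i j * (λ i - μ j) ^ 2 = tr ((A - B) ^ 2)` (`exists_spectral_coupling`).

Suppose `tr ((A - B) ^ 2) ≤ n * ε ^ 3`. If `k` eigenvalues of `A` are at most `x` and `m`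
eigenvalues of `B` are at most `x + ε`, then `W` carries mass at least `k - m` between eigenvalues
`λ i ≤ x` and `μ j > x + ε`, so `ε ^ 2 * (k - m) ≤ n * ε ^ 3` and `F_A x ≤ F_B (x + ε) + ε`
(`esd_le_esd_add`). By symmetry `ε` is admissible in the Levy distance. No sorting of the
eigenvalues (Hoffman–Wielandt) is needed.

For `0`–`1` matrices `(A i j - B i j) ^ 2 = A i j + B i j - 2 * A i j * B i j`; for adjacency
matrices, row sums are degrees and row sums of entrywise products count common neighbours.
-/

open MeasureTheory ProbabilityTheory Real Filter
open scoped ENNReal Classical BigOperators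

noncomputable section

/-- The Levy distance between two distribution functions. -/
noncomputable def levyDist (F G : ℝ → ℝ) : ℝ :=
  sInf {ε : ℝ | 0 < ε ∧ ∀ x : ℝ, F (x - ε) - ε ≤ G x ∧ G x ≤ F (x + ε) + ε}

/-- The empirical spectral distribution function of a real symmetric matrix:
`F_A(x) = (1/n)·#{i : λ_i ≤ x}`, eigenvalues counted with multiplicity. -/
noncomputable def esd {ι : Type*} [Fintype ι] [DecidableEq ι] (A : Matrix ι ι ℝ) : ℝ → ℝ :=
  if hA : A.IsHermitian then
    fun x => ((Finset.univ.filter (fun i => hA.eigenvalues i ≤ x)).card : ℝ) /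
      (Fintype.card ι : ℝ)
  else fun _ => 0

/-- Adjacency matrix of the geometric graph of radius `r` on points `z i` of `𝕋^d`
under the `ℓ_p` quotient metric. -/
noncomputable def adjMat {ι : Type*} [Fintype ι] [DecidableEq ι]
    (d : ℕ) (p : ℝ≥0∞) (r : ℝ) (z : ι → Torus d) : Matrix ι ι ℝ :=
  Matrix.of fun i j => if i ≠ j ∧ torusDist d p (z i) (z j) ≤ r then 1 else 0

/-- The real spectral theorem with transposes in place of `star`, and with the diagonalization
stated as the two intertwining relations of `U` with the diagonal matrix of eigenvalues. -/
lemma exists_orthogonal_diagonalization {ι : Type*} [Fintype ι] [DecidableEq ι]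
    {A : Matrix ι ι ℝ} (hA : A.IsHermitian) :
    ∃ U : Matrix ι ι ℝ, U.transpose * U = 1 ∧ U * U.transpose = 1 ∧
      U.transpose * A = Matrix.diagonal hA.eigenvalues * U.transpose ∧
      A * U = U * Matrix.diagonal hA.eigenvalues := by
  have h1 : (hA.eigenvectorUnitary : Matrix ι ι ℝ).transpose
      * (hA.eigenvectorUnitary : Matrix ι ι ℝ) = 1 := by
    have h := Unitary.coe_star_mul_self hA.eigenvectorUnitary
    rwa [Matrix.star_eq_conjTranspose, Matrix.conjTranspose_eq_transpose_of_trivial] at h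
  have h2 : (hA.eigenvectorUnitary : Matrix ι ι ℝ)
      * (hA.eigenvectorUnitary : Matrix ι ι ℝ).transpose = 1 := mul_eq_one_comm.mp h1
  have h3 : A = (hA.eigenvectorUnitary : Matrix ι ι ℝ) * Matrix.diagonal hA.eigenvalues
      * (hA.eigenvectorUnitary : Matrix ι ι ℝ).transpose := by
    have h := hA.spectral_theorem
    rw [Unitary.conjStarAlgAut_apply] at h
    simpa [Matrix.star_eq_conjTranspose, Matrix.conjTranspose_eq_transpose_of_trivial,
      Function.comp_def] using h
  refine ⟨hA.eigenvectorUnitary, h1, h2, ?_, ?_⟩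
  · refine (congrArg (_ * ·) h3).trans ?_
    simp only [← mul_assoc]
    rw [h1, one_mul]
  · refine (congrArg (· * _) h3).trans ?_
    simp only [mul_assoc]
    rw [h1, mul_one]

lemma sum_sq_eq_trace {ι : Type*} [Fintype ι] (M : Matrix ι ι ℝ) :
    ∑ i, ∑ j, M i j ^ 2 = (M * M.transpose).trace := by
  simp [Matrix.trace, Matrix.mul_apply, sq]

/-- The squared Frobenius norm of `A - B` is the quadratic cost of transporting the eigenvalues
of `A` to those of `B` along the doubly stochastic matrix `W` of squared inner products of the
two eigenbases. -/
lemma exists_spectral_coupling {ι : Type*} [Fintype ι] [DecidableEq ι]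
    {A B : Matrix ι ι ℝ} (hA : A.IsHermitian) (hB : B.IsHermitian) :
    ∃ W : Matrix ι ι ℝ, (∀ i j, 0 ≤ W i j) ∧ (∀ i, ∑ j, W i j = 1) ∧ (∀ j, ∑ i, W i j = 1) ∧
      ∑ i, ∑ j, W i j * (hA.eigenvalues i - hB.eigenvalues j) ^ 2
        = ∑ i, ∑ j, (A i j - B i j) ^ 2 := by
  obtain ⟨U, hU1, hU2, hU3, -⟩ := exists_orthogonal_diagonalization hA
  obtain ⟨V, hV1, hV2, -, hV4⟩ := exists_orthogonal_diagonalization hB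
  have hrow : (U.transpose * V) * (U.transpose * V).transpose = 1 := by
    rw [Matrix.transpose_mul, Matrix.transpose_transpose, mul_assoc, ← mul_assoc V, hV2, one_mul,
      hU1]
  have hcol : (U.transpose * V).transpose * (U.transpose * V) = 1 := mul_eq_one_comm.mp hrow
  refine ⟨Matrix.of fun i j => (U.transpose * V) i j ^ 2, fun i j => sq_nonneg _, fun i => ?_,
    fun j => ?_, ?_⟩
  · have h := congrFun (congrFun hrow i) i
    rw [Matrix.mul_apply, Matrix.one_apply_eq] at h
    simpa [sq] using h
  · have h := congrFun (congrFun hcol j) j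
    rw [Matrix.mul_apply, Matrix.one_apply_eq] at h
    simpa [sq] using h
  · have hM : ∀ i j, (U.transpose * (A - B) * V) i j
        = (hA.eigenvalues i - hB.eigenvalues j) * (U.transpose * V) i j := by
      intro i j
      have h : U.transpose * (A - B) * V = Matrix.diagonal hA.eigenvalues * (U.transpose * V)
          - (U.transpose * V) * Matrix.diagonal hB.eigenvalues := by
        rw [mul_sub, sub_mul, hU3, mul_assoc, mul_assoc U.transpose B, hV4, mul_assoc]
      rw [h, Matrix.sub_apply, Matrix.diagonal_mul, Matrix.mul_diagonal]
      ring
    calc _ = ∑ i, ∑ j, (U.transpose * (A - B) * V) i j ^ 2 := by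
          refine Finset.sum_congr rfl fun i _ => Finset.sum_congr rfl fun j _ => ?_
          rw [hM, Matrix.of_apply]
          ring
      _ = ((A - B) * (A - B).transpose).trace := by
          rw [sum_sq_eq_trace, Matrix.transpose_mul, Matrix.transpose_mul,
            Matrix.transpose_transpose]
          have h : U.transpose * (A - B) * V * (V.transpose * ((A - B).transpose * U))
              = U.transpose * (((A - B) * (A - B).transpose) * U) := by
            rw [mul_assoc _ V, ← mul_assoc V, hV2, one_mul]
            simp only [mul_assoc]
          rw [h, Matrix.trace_mul_comm, mul_assoc, hU2, mul_one]
      _ = _ := by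
          rw [← sum_sq_eq_trace]
          simp only [Matrix.sub_apply]

/-- Eigenvalues of `A` in `(-∞, x]` carry at least `k - m` of mass that the coupling sends beyond
`x + ε`, where `k` and `m` count the eigenvalues of `A` up to `x` and of `B` up to `x + ε`; each
unit of that mass costs more than `ε ^ 2`. -/
lemma esd_le_esd_add {ι : Type*} [Fintype ι] [DecidableEq ι] [Nonempty ι]
    {A B : Matrix ι ι ℝ} (hA : A.IsHermitian) (hB : B.IsHermitian) {ε : ℝ} (hε : 0 < ε)
    (h : ∑ i, ∑ j, (A i j - B i j) ^ 2 ≤ (Fintype.card ι : ℝ) * ε ^ 3) (x : ℝ) :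
    esd A x ≤ esd B (x + ε) + ε := by
  obtain ⟨W, hW0, hWrow, hWcol, hW⟩ := exists_spectral_coupling hA hB
  have hn : (0 : ℝ) < Fintype.card ι := by exact_mod_cast Fintype.card_pos
  simp only [esd, dif_pos hA, dif_pos hB]
  set S := Finset.univ.filter fun i => hA.eigenvalues i ≤ x
  set T := Finset.univ.filter fun j => hB.eigenvalues j ≤ x + ε
  have hS : ∑ i ∈ S, ∑ j, W i j = S.card := by simp [hWrow]
  have hT : ∑ i ∈ S, ∑ j ∈ T, W i j ≤ T.card := by
    calc ∑ i ∈ S, ∑ j ∈ T, W i j ≤ ∑ i, ∑ j ∈ T, W i j :=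
          Finset.sum_le_sum_of_subset_of_nonneg (Finset.subset_univ _)
            fun i _ _ => Finset.sum_nonneg fun j _ => hW0 i j
      _ = T.card := by
          refine Finset.sum_comm.trans ?_
          simp [hWcol]
  have hsplit : ∑ i ∈ S, ∑ j, W i j
      = ∑ i ∈ S, ∑ j ∈ T, W i j + ∑ i ∈ S, ∑ j ∈ Tᶜ, W i j := by
    rw [← Finset.sum_add_distrib]
    exact Finset.sum_congr rfl fun i _ => (Finset.sum_add_sum_compl T _).symm
  have hcost : ε ^ 2 * ∑ i ∈ S, ∑ j ∈ Tᶜ, W i j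
      ≤ ∑ i, ∑ j, W i j * (hA.eigenvalues i - hB.eigenvalues j) ^ 2 := by
    have hnn : ∀ i j, 0 ≤ W i j * (hA.eigenvalues i - hB.eigenvalues j) ^ 2 :=
      fun i j => mul_nonneg (hW0 i j) (sq_nonneg _)
    calc ε ^ 2 * ∑ i ∈ S, ∑ j ∈ Tᶜ, W i j
        = ∑ i ∈ S, ∑ j ∈ Tᶜ, W i j * ε ^ 2 := by
          simp only [Finset.mul_sum, mul_comm]
      _ ≤ ∑ i ∈ S, ∑ j ∈ Tᶜ, W i j * (hA.eigenvalues i - hB.eigenvalues j) ^ 2 := by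
          refine Finset.sum_le_sum fun i hi => Finset.sum_le_sum fun j hj => ?_
          have hi' : hA.eigenvalues i ≤ x := by simpa [S] using hi
          have hj' : x + ε < hB.eigenvalues j := by simpa [T] using hj
          exact mul_le_mul_of_nonneg_left (by nlinarith) (hW0 i j)
      _ ≤ ∑ i ∈ S, ∑ j, W i j * (hA.eigenvalues i - hB.eigenvalues j) ^ 2 :=
          Finset.sum_le_sum fun i _ => Finset.sum_le_sum_of_subset_of_nonneg
            (Finset.subset_univ _) fun j _ _ => hnn i j
      _ ≤ _ := Finset.sum_le_sum_of_subset_of_nonneg (Finset.subset_univ _)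
            fun i _ _ => Finset.sum_nonneg fun j _ => hnn i j
  have hmass : ε ^ 2 * ((S.card : ℝ) - T.card) ≤ ε ^ 2 * (Fintype.card ι * ε) := by
    calc ε ^ 2 * ((S.card : ℝ) - T.card) ≤ ε ^ 2 * ∑ i ∈ S, ∑ j ∈ Tᶜ, W i j :=
          mul_le_mul_of_nonneg_left (by linarith) (sq_nonneg ε)
      _ ≤ Fintype.card ι * ε ^ 3 := by linarith
      _ = _ := by ring
  have hle := le_of_mul_le_mul_left hmass (by positivity)
  rw [div_add' _ _ _ hn.ne']
  exact div_le_div_of_nonneg_right (by linarith) hn.le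

lemma levyDist_esd_cube_le {ι : Type*} [Fintype ι] [DecidableEq ι] [Nonempty ι]
    {A B : Matrix ι ι ℝ} (hA : A.IsHermitian) (hB : B.IsHermitian) :
    levyDist (esd A) (esd B) ^ 3
      ≤ (1 / (Fintype.card ι : ℝ)) * ∑ i, ∑ j, (A i j - B i j) ^ 2 := by
  have hn : (0 : ℝ) < Fintype.card ι := by exact_mod_cast Fintype.card_pos
  have hL : 0 ≤ levyDist (esd A) (esd B) := Real.sInf_nonneg fun ε hε => hε.1.le
  set c := (1 / (Fintype.card ι : ℝ)) * ∑ i, ∑ j, (A i j - B i j) ^ 2 with hc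
  have hc0 : 0 ≤ c := by positivity
  have hsum : ∑ i, ∑ j, (A i j - B i j) ^ 2 = Fintype.card ι * c := by
    rw [hc]; field_simp
  -- The slack `δ` covers `c = 0`, where the cube root of `c` is not an admissible positive `ε`.
  refine le_of_forall_pos_le_add fun δ hδ => ?_
  have hcδ : 0 < c + δ := by linarith
  set ε := (c + δ) ^ (1 / 3 : ℝ) with hεdef
  have hε : 0 < ε := Real.rpow_pos_of_pos hcδ _
  have hε3 : ε ^ 3 = c + δ := by
    rw [hεdef, ← Real.rpow_natCast, ← Real.rpow_mul hcδ.le]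
    norm_num
  have hle : ∑ i, ∑ j, (A i j - B i j) ^ 2 ≤ (Fintype.card ι : ℝ) * ε ^ 3 := by
    rw [hsum, hε3]
    exact mul_le_mul_of_nonneg_left (by linarith) hn.le
  have hle' : ∑ i, ∑ j, (B i j - A i j) ^ 2 ≤ (Fintype.card ι : ℝ) * ε ^ 3 := by
    simpa only [sub_sq_comm] using hle
  have hLε : levyDist (esd A) (esd B) ≤ ε := by
    refine csInf_le ⟨0, fun y hy => hy.1.le⟩ ⟨hε, fun x => ⟨?_, ?_⟩⟩
    · have := esd_le_esd_add hA hB hε hle (x - ε)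
      rw [sub_add_cancel] at this
      linarith
    · exact esd_le_esd_add hB hA hε hle' x
  rw [← hε3]
  exact pow_le_pow_left₀ hL hLε 3

lemma levyDist_esd_cube_le_of_zero_one {n : ℕ} (hn : 1 ≤ n) {A B : Matrix (Fin n) (Fin n) ℝ}
    (hA : A.IsHermitian) (hB : B.IsHermitian)
    (hA01 : ∀ i j, A i j = 0 ∨ A i j = 1) (hB01 : ∀ i j, B i j = 0 ∨ B i j = 1) :
    levyDist (esd A) (esd B) ^ 3
      ≤ (1 / (n : ℝ)) * ((∑ i, ∑ j, A i j) + (∑ i, ∑ j, B i j)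
          - 2 * ∑ i, ∑ j, A i j * B i j) := by
  have : Nonempty (Fin n) := ⟨⟨0, hn⟩⟩
  have h := levyDist_esd_cube_le hA hB
  have hsum : ∑ i, ∑ j, (A i j - B i j) ^ 2 = (∑ i, ∑ j, A i j) + (∑ i, ∑ j, B i j)
      - 2 * ∑ i, ∑ j, A i j * B i j := by
    simp only [Finset.mul_sum, ← Finset.sum_add_distrib, ← Finset.sum_sub_distrib]
    refine Finset.sum_congr rfl fun i _ => Finset.sum_congr rfl fun j _ => ?_
    rcases hA01 i j with ha | ha <;> rcases hB01 i j with hb | hb <;> rw [ha, hb] <;> norm_num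
  rwa [hsum, Fintype.card_fin] at h

lemma torusDist_comm (d : ℕ) (p : ℝ≥0∞) (x y : Torus d) :
    torusDist d p x y = torusDist d p y x := by
  simp only [torusDist, norm_sub_rev]

lemma adjMat_isHermitian {ι : Type*} [Fintype ι] [DecidableEq ι] (d : ℕ) (p : ℝ≥0∞) (r : ℝ)
    (z : ι → Torus d) : (adjMat d p r z).IsHermitian := by
  ext i j
  simp only [adjMat, Matrix.conjTranspose_apply, Matrix.of_apply, star_trivial,
    torusDist_comm d p (z j), ne_comm (a := j)]

lemma adjMat_zero_or_one {ι : Type*} [Fintype ι] [DecidableEq ι] (d : ℕ) (p : ℝ≥0∞) (r : ℝ)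
    (z : ι → Torus d) (i j : ι) : adjMat d p r z i j = 0 ∨ adjMat d p r z i j = 1 := by
  simp only [adjMat, Matrix.of_apply]
  split_ifs <;> simp

/-- Deterministic core of the paper's Lemma 4. First claim: for `n×n` real symmetric
`{0,1}`-matrices `A, B` with zero diagonal,
`L(F_A,F_B)^3 ≤ (1/n)(ΣA_{ij} + ΣB_{ij} − 2ΣA_{ij}B_{ij})`.
Second claim ("in particular"): for points `x_1,…,x_n ∈ 𝕋^d` and an enumeration
`x'_1,…,x'_n` of the grid `D_n` (`n = N^d`) whose geometric graph is `a'_n`-regular,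
`L(v_n, v'_n)^3 ≤ (1/n)Σ_i N(x_i) + a'_n − (2/n)Σ_i N(x_i, x'_i)`. -/
theorem levy_cube_trace_bound (n : ℕ) (hn : 1 ≤ n) :
    (∀ A B : Matrix (Fin n) (Fin n) ℝ, A.IsHermitian → B.IsHermitian →
      (∀ i j, A i j = 0 ∨ A i j = 1) → (∀ i j, B i j = 0 ∨ B i j = 1) →
      (∀ i, A i i = 0) → (∀ i, B i i = 0) →
      levyDist (esd A) (esd B) ^ 3
        ≤ (1 / (n : ℝ)) * ((∑ i, ∑ j, A i j) + (∑ i, ∑ j, B i j)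
            - 2 * ∑ i, ∑ j, A i j * B i j))
    ∧ (∀ (d N : ℕ) (p : ℝ≥0∞) (r : ℝ) (x x' : Fin n → Torus d) (a' : ℝ),
        1 ≤ d → 1 ≤ p → 0 < r →
        Function.Injective x' → Set.range x' = ↑(gridFinset d N) →
        (∀ i, ((Finset.univ.filter
            (fun j => j ≠ i ∧ torusDist d p (x' i) (x' j) ≤ r)).card : ℝ) = a') →
        levyDist (esd (adjMat d p r x)) (esd (adjMat d p r x')) ^ 3
          ≤ (1 / (n : ℝ)) * (∑ i, ((Finset.univ.filter
                (fun j => j ≠ i ∧ torusDist d p (x i) (x j) ≤ r)).card : ℝ))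
            + a'
            - (2 / (n : ℝ)) * (∑ i, ((Finset.univ.filter
                (fun j => j ≠ i ∧ torusDist d p (x i) (x j) ≤ r
                  ∧ torusDist d p (x' i) (x' j) ≤ r)).card : ℝ))) := by
  refine ⟨fun A B hA hB hA01 hB01 _ _ => levyDist_esd_cube_le_of_zero_one hn hA hB hA01 hB01, ?_⟩
  intro d N p r x x' a' _ _ _ _ _ hdeg
  have hdegree : ∀ (z : Fin n → Torus d) (i : Fin n), ∑ j, adjMat d p r z i j
      = ((Finset.univ.filter (fun j => j ≠ i ∧ torusDist d p (z i) (z j) ≤ r)).card : ℝ) := by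
    intro z i
    simp only [adjMat, Matrix.of_apply, Finset.sum_boole, ne_comm (a := i)]
  have hcommon : ∀ i : Fin n, ∑ j, adjMat d p r x i j * adjMat d p r x' i j
      = ((Finset.univ.filter (fun j => j ≠ i ∧ torusDist d p (x i) (x j) ≤ r
          ∧ torusDist d p (x' i) (x' j) ≤ r)).card : ℝ) := by
    intro i
    rw [← Finset.sum_boole]
    refine Finset.sum_congr rfl fun j _ => ?_
    simp only [adjMat, Matrix.of_apply, ne_comm (a := i)]
    split_ifs <;> first | (exfalso; tauto) | norm_num
  have h := levyDist_esd_cube_le_of_zero_one hn (adjMat_isHermitian d p r x)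
    (adjMat_isHermitian d p r x') (adjMat_zero_or_one d p r x) (adjMat_zero_or_one d p r x')
  simp only [hdegree, hcommon, hdeg, Finset.sum_const, Finset.card_univ, Fintype.card_fin,
    nsmul_eq_mul] at h
  have hn0 : (n : ℝ) ≠ 0 := by positivity
  refine h.trans (le_of_eq ?_)
  field_simp

end
end

section
/- Let d ≥ 1, N ≥ 1, n = N^d, 0 < r < 1/2, and k = ⌊Nr⌋. Let A be the n×n adjacency matrix (over ℂ), indexed by (Z/NZ)^d, of the deterministic geometric graph G(D_n, r) under the ℓ_∞ quotient metric. Then the characteristic polynomial of A factors completely as char(A)(X) = ∏_{m ∈ {0,…,N−1}^d} (X − λ_m), where λ_m = ∏_{s=1}^d c(m_s) − 1, c(0) = 2k+1 and c(m) = sin(mπ(2k+1)/N)/sin(mπ/N) for m ≠ 0; i.e. the multiset of eigenvalues of A, counted with multiplicity, is exactly { λ_m : m ∈ {0,…,N−1}^d }. -/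
/-!
Adding the loops to the graph gives the matrix `A + 1`, whose `(g, h)` entry is the indicator that
every coordinate of `g` is within `r` of that of `h` on the circle. It is therefore the `d`-fold
Kronecker power of the one-dimensional matrix `circAdj` (`gridAdj_eq`). The latter is circulant, so
the Fourier matrix diagonalizes it (`circAdj_mul_fourierMat`), and its eigenvalues are values of
the Dirichlet kernel, summed in closed form in `dirichlet_sum`; the condition `r < 1/2` gives
`2k + 1 ≤ N`, so that each point of a ball is counted once. Kronecker powers are multiplicative
and preserve diagonal matrices, so the Kronecker power of the Fourier matrix, invertible because
the Fourier matrix is a Vandermonde matrix with distinct nodes, diagonalizes `A + 1`, hence `A`.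
-/

open MeasureTheory ProbabilityTheory Real Filter
open scoped ENNReal Classical BigOperators

noncomputable section

/-- The (complex) adjacency matrix, indexed by `(ℤ/Nℤ)^d ≃ {0,…,N−1}^d`, of the
deterministic geometric graph `G(D_n, r)` on the grid under the `ℓ_∞` quotient metric. -/
noncomputable def gridAdj (d N : ℕ) (r : ℝ) :
    Matrix (Fin d → Fin N) (Fin d → Fin N) ℂ :=
  Matrix.of fun g h =>
    if g ≠ h ∧ torusDist d ⊤ (gridPt d N g) (gridPt d N h) ≤ r then 1 else 0

/-- `c(0) = 2k+1` and `c(m) = sin(mπ(2k+1)/N)/sin(mπ/N)` for `m ≠ 0`. -/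
noncomputable def cCoef (N k : ℕ) (m : ℕ) : ℝ :=
  if m = 0 then 2 * k + 1
  else Real.sin ((m : ℝ) * Real.pi * (2 * k + 1) / N) / Real.sin ((m : ℝ) * Real.pi / N)

/-- The `d`-fold Kronecker power of a square matrix `M`, indexed by `Fin d → ι`:
its `(g, h)` entry is `∏ s, M (g s) (h s)`. -/
def kronPow {ι : Type*} (d : ℕ) (M : Matrix ι ι ℂ) : Matrix (Fin d → ι) (Fin d → ι) ℂ :=
  Matrix.of fun g h => ∏ s, M (g s) (h s)

lemma kronPow_mul {ι : Type*} [Fintype ι] (d : ℕ) (M M' : Matrix ι ι ℂ) :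
    kronPow d (M * M') = kronPow d M * kronPow d M' := by
  ext g h
  simp only [kronPow, Matrix.of_apply, Matrix.mul_apply, ← Finset.prod_mul_distrib]
  rw [Finset.prod_univ_sum, Fintype.piFinset_univ]

lemma kronPow_diagonal {ι : Type*} [DecidableEq ι] (d : ℕ) (c : ι → ℂ) :
    kronPow d (Matrix.diagonal c) = Matrix.diagonal fun g : Fin d → ι => ∏ s, c (g s) := by
  ext g h
  by_cases hgh : g = h
  · subst hgh
    simp [kronPow]
  · obtain ⟨s, hs⟩ := Function.ne_iff.mp hgh
    rw [Matrix.diagonal_apply_ne _ hgh]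
    exact Finset.prod_eq_zero (Finset.mem_univ s) (Matrix.diagonal_apply_ne _ hs)

lemma kronPow_one {ι : Type*} [DecidableEq ι] (d : ℕ) :
    kronPow d (1 : Matrix ι ι ℂ) = 1 := by
  rw [← Matrix.diagonal_one, kronPow_diagonal]
  simp

/-- The adjacency matrix, with loops, of the circular grid `{0, 1/N, …, (N-1)/N}` at radius `r`. -/
def circAdj (N : ℕ) (r : ℝ) : Matrix (Fin N) (Fin N) ℂ :=
  Matrix.of fun i j =>
    if ‖((((i : ℕ) : ℝ) / N : ℝ) : AddCircle (1 : ℝ)) - ((((j : ℕ) : ℝ) / N : ℝ) : AddCircle (1 : ℝ))‖ ≤ r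
    then 1 else 0

/-- An `ℓ_∞` ball is a product of circle balls, so adding the loops turns the adjacency matrix
into a Kronecker power. -/
lemma gridAdj_eq (d N : ℕ) (hd : 1 ≤ d) (r : ℝ) (hr : 0 < r) :
    gridAdj d N r = kronPow d (circAdj N r) - 1 := by
  have : Nonempty (Fin d) := ⟨⟨0, hd⟩⟩
  have hdist : ∀ g h : Fin d → Fin N, torusDist d ⊤ (gridPt d N g) (gridPt d N h) ≤ r ↔
      ∀ s, ‖gridPt d N g s - gridPt d N h s‖ ≤ r := fun g h => by
    rw [torusDist, if_pos rfl]
    exact ciSup_le_iff (Set.finite_range _).bddAbove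
  have hprod : ∀ g h : Fin d → Fin N, kronPow d (circAdj N r) g h =
      if ∀ s, ‖gridPt d N g s - gridPt d N h s‖ ≤ r then 1 else 0 := fun g h => by
    simp only [kronPow, circAdj, Matrix.of_apply]
    rw [Finset.prod_ite_zero]
    simp only [gridPt, Finset.mem_univ, true_imp_iff, Finset.prod_const_one]
    congr
  ext g h
  rw [Matrix.sub_apply, hprod]
  simp only [gridAdj, Matrix.of_apply, hdist]
  by_cases hgh : g = h
  · subst hgh
    simp [hr.le]
  · simp [hgh, Matrix.one_apply_ne hgh]

/-- The grid points within `r` of `i/N` on the circle are the `(i + u)/N` with `-k ≤ u ≤ k`.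
The offset is encoded as `u = t - k` with `t < 2k + 1`, shifted by `N` to stay in `ℕ`. -/
lemma norm_le_iff (N : ℕ) (hN : 1 ≤ N) (r : ℝ) (hr : 0 < r) (k : ℕ)
    (hk : k = ⌊(N : ℝ) * r⌋₊) (hkN : 2 * k < N) (i j : Fin N) :
    ‖((((i : ℕ) : ℝ) / N : ℝ) : AddCircle (1 : ℝ)) - ((((j : ℕ) : ℝ) / N : ℝ) : AddCircle (1 : ℝ))‖ ≤ r
      ↔ ∃ t < 2 * k + 1, ((i : ℕ) + (t + (N - k))) % N = j := by
  have hN0 : (0 : ℝ) < N := by exact_mod_cast hN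
  have hscale : ∀ q : ℤ, |((i : ℕ) : ℝ) / N - ((j : ℕ) : ℝ) / N - q| ≤ r ↔
      |((i : ℕ) : ℤ) - (j : ℕ) - q * N| ≤ k := fun q => by
    have h1 : ((i : ℕ) : ℝ) / N - ((j : ℕ) : ℝ) / N - q
        = ((((i : ℕ) : ℤ) - (j : ℕ) - q * N : ℤ) : ℝ) / N := by
      push_cast; field_simp
    rw [h1, abs_div, abs_of_pos hN0, div_le_iff₀ hN0, ← Int.cast_abs, Int.abs_eq_natAbs,
      Int.cast_natCast, mul_comm r, hk, Nat.cast_le, Nat.le_floor_iff (by positivity)]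
  have hnorm : ‖((((i : ℕ) : ℝ) / N : ℝ) : AddCircle (1 : ℝ)) -
      ((((j : ℕ) : ℝ) / N : ℝ) : AddCircle (1 : ℝ))‖ ≤ r ↔
      ∃ q : ℤ, |((i : ℕ) : ℤ) - (j : ℕ) - q * N| ≤ k := by
    rw [← AddCircle.coe_sub, UnitAddCircle.norm_eq]
    constructor
    · exact fun h => ⟨_, (hscale _).1 h⟩
    · rintro ⟨q, hq⟩
      exact (round_le _ q).trans ((hscale q).2 hq)
  rw [hnorm]
  have hi := i.2
  have hj := j.2
  constructor
  · rintro ⟨q, hq⟩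
    rw [abs_le] at hq
    refine ⟨((j : ℕ) - (i : ℕ) + q * N + k : ℤ).toNat, by omega, ?_⟩
    zify
    rw [Nat.cast_sub (by omega), Int.toNat_of_nonneg (by omega)]
    have h2 : ((i : ℕ) : ℤ) + ((j : ℕ) - (i : ℕ) + q * N + k + (N - k)) = (j : ℕ) + N * (q + 1) := by
      ring
    rw [h2, Int.add_mul_emod_self_left]
    exact Int.emod_eq_of_lt (by omega) (by omega)
  · rintro ⟨t, ht, h⟩
    have h3 := Nat.mod_add_div ((i : ℕ) + (t + (N - k))) N
    rw [h] at h3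
    set Q := ((i : ℕ) + (t + (N - k))) / N
    refine ⟨(Q : ℤ) - 1, ?_⟩
    zify [show k ≤ N by omega] at h3 ht
    rw [abs_le]
    have h4 : ((Q : ℤ) - 1) * N = N * Q - N := by ring
    rw [h4]
    constructor <;> linarith

lemma circAdj_sum (N : ℕ) (hN : 1 ≤ N) (r : ℝ) (hr : 0 < r) (k : ℕ)
    (hk : k = ⌊(N : ℝ) * r⌋₊) (hkN : 2 * k < N) (ω : ℂ) (hω : ω ^ N = 1) (i : Fin N) :
    ∑ j : Fin N, circAdj N r i j * ω ^ (j : ℕ)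
      = ω ^ (i : ℕ) * (ω ^ (N - k) * ∑ t ∈ Finset.range (2 * k + 1), ω ^ t) := by
  simp only [circAdj, Matrix.of_apply, norm_le_iff N hN r hr k hk hkN, ite_mul, one_mul, zero_mul]
  rw [← Finset.sum_filter, Finset.mul_sum, Finset.mul_sum]
  symm
  refine Finset.sum_bij (fun t _ => ⟨((i : ℕ) + (t + (N - k))) % N, Nat.mod_lt _ hN⟩) ?_ ?_ ?_ ?_
  · intro t ht
    simp only [Finset.mem_filter, Finset.mem_univ, true_and]
    exact ⟨t, Finset.mem_range.1 ht, rfl⟩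
  · intro t ht u hu h
    rw [Finset.mem_range] at ht hu
    -- `t` and `u` lie in an interval of `2k + 1 ≤ N` integers, so congruence forces equality
    have h1 : t ≡ u [MOD N] :=
      Nat.ModEq.add_right_cancel' _ (Nat.ModEq.add_left_cancel' _ (Fin.mk.inj_iff.1 h))
    exact h1.eq_of_lt_of_lt (by omega) (by omega)
  · intro j hj
    obtain ⟨t, ht, h⟩ := (Finset.mem_filter.1 hj).2
    exact ⟨t, Finset.mem_range.2 ht, Fin.ext h⟩
  · intro t _
    rw [← pow_eq_pow_mod _ hω]
    ring

/-- The Dirichlet kernel `∑_{u = -k}^{k} e^{2πimu/N}` is `c(m)`; here `ω^{-k}` is written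
`ω ^ (N - k)`. -/
lemma dirichlet_sum (N : ℕ) (k : ℕ) (hkN : 2 * k < N) (m : Fin N) (ω : ℂ)
    (hω : ω = Complex.exp (2 * Real.pi * Complex.I / N) ^ (m : ℕ)) (hωN : ω ^ N = 1) :
    ω ^ (N - k) * ∑ t ∈ Finset.range (2 * k + 1), ω ^ t = (cCoef N k m : ℂ) := by
  have hN0 : (N : ℂ) ≠ 0 := by
    have : N ≠ 0 := by omega
    exact_mod_cast this
  by_cases hm : (m : ℕ) = 0
  · rw [hm, pow_zero] at hω
    simp [hω, hm, cCoef]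
  have hprim := Complex.isPrimitiveRoot_exp N (by omega)
  have hω1 : ω ≠ 1 := by
    rw [hω]
    exact hprim.pow_ne_one_of_pos_of_lt hm m.2
  set θ : ℂ := (m : ℕ) * Real.pi / N with hθ
  -- `z` is a square root of `ω`
  set z : ℂ := Complex.exp (θ * Complex.I) with hz
  have hz0 : z ≠ 0 := Complex.exp_ne_zero _
  have hωz : ω = z ^ 2 := by
    rw [hω, hz, ← Complex.exp_nat_mul, ← Complex.exp_nat_mul, hθ]
    congr 1
    push_cast
    ring
  have hsin1 : Complex.sin θ = (z⁻¹ - z) * Complex.I / 2 := by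
    rw [Complex.sin, neg_mul, Complex.exp_neg]
  have hsin2 : Complex.sin ((m : ℕ) * Real.pi * (2 * k + 1) / N)
      = ((z ^ (2 * k + 1))⁻¹ - z ^ (2 * k + 1)) * Complex.I / 2 := by
    have h1 : (m : ℕ) * Real.pi * (2 * k + 1) / N * Complex.I
        = ((2 * k + 1 : ℕ) : ℂ) * (θ * Complex.I) := by
      rw [hθ]; push_cast; ring
    rw [Complex.sin, neg_mul, h1, Complex.exp_neg, Complex.exp_nat_mul]
  have hpow : ω ^ (N - k) = (z ^ k)⁻¹ * (z ^ k)⁻¹ := by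
    have h2 : ω ^ (N - k) * ω ^ k = 1 := by
      rw [← pow_add, Nat.sub_add_cancel (by omega), hωN]
    rw [eq_inv_of_mul_eq_one_left h2, hωz, ← mul_inv]
    ring
  have hz2 : z ^ 2 - 1 ≠ 0 := by
    rw [← hωz]; exact sub_ne_zero.2 hω1
  have hz3 : 1 - z ^ 2 ≠ 0 := by
    rw [← neg_sub]; exact neg_ne_zero.2 hz2
  rw [cCoef, if_neg hm]
  push_cast
  rw [hsin2, hsin1, geom_sum_eq hω1, hpow, hωz]
  have h4 : z⁻¹ - z = (1 - z ^ 2) / z := by field_simp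
  rw [h4]
  field_simp
  ring

/-- The one-dimensional Fourier matrix, with entries `e^{2πijm/N}`. -/
def fourierMat (N : ℕ) : Matrix (Fin N) (Fin N) ℂ :=
  (Matrix.vandermonde fun m : Fin N =>
    Complex.exp (2 * Real.pi * Complex.I / N) ^ (m : ℕ)).transpose

lemma fourierMat_isUnit_det (N : ℕ) (hN : 1 ≤ N) : IsUnit (fourierMat N).det := by
  rw [fourierMat, Matrix.det_transpose, isUnit_iff_ne_zero, Matrix.det_vandermonde_ne_zero_iff]
  intro a b h
  exact Fin.ext ((Complex.isPrimitiveRoot_exp N (by omega)).pow_inj a.2 b.2 h)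

lemma circAdj_mul_fourierMat (N : ℕ) (hN : 1 ≤ N) (r : ℝ) (hr : 0 < r) (k : ℕ)
    (hk : k = ⌊(N : ℝ) * r⌋₊) (hkN : 2 * k < N) :
    circAdj N r * fourierMat N
      = fourierMat N * Matrix.diagonal fun m : Fin N => (cCoef N k m : ℂ) := by
  ext i m
  have hω : (Complex.exp (2 * Real.pi * Complex.I / N) ^ (m : ℕ)) ^ N = 1 := by
    rw [← pow_mul, mul_comm (m : ℕ), pow_mul, (Complex.isPrimitiveRoot_exp N (by omega)).pow_eq_one,
      one_pow]
  rw [Matrix.mul_diagonal, Matrix.mul_apply]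
  simp only [fourierMat, Matrix.transpose_apply, Matrix.vandermonde_apply]
  rw [circAdj_sum N hN r hr k hk hkN _ hω, dirichlet_sum N k hkN m _ rfl hω]

/-- Complete-spectrum form of the paper's Lemma 7: the characteristic polynomial of the
`ℓ_∞` grid adjacency matrix factors completely as `∏_{m ∈ {0,…,N−1}^d} (X − λ_m)`, with
`λ_m = ∏_s c(m_s) − 1` and `k = ⌊Nr⌋`. -/
theorem grid_adj_charpoly (d N : ℕ) (hd : 1 ≤ d) (hN : 1 ≤ N)
    (r : ℝ) (hr : 0 < r) (hr' : r < 1 / 2) (k : ℕ) (hk : k = ⌊(N : ℝ) * r⌋₊) :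
    (gridAdj d N r).charpoly
      = ∏ m : Fin d → Fin N,
          (Polynomial.X - Polynomial.C ((∏ s, (cCoef N k ((m s : ℕ)) : ℂ)) - 1)) := by
  have hkN : 2 * k < N := by
    have hN0 : (0 : ℝ) < N := by exact_mod_cast hN
    have h1 : (k : ℝ) ≤ N * r := hk ▸ Nat.floor_le (by positivity)
    have h2 : ((2 * k : ℕ) : ℝ) < N := by push_cast; nlinarith
    exact_mod_cast h2
  have hunit := fourierMat_isUnit_det N hN
  have h1 : kronPow d (fourierMat N) * kronPow d (fourierMat N)⁻¹ = 1 := by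
    rw [← kronPow_mul, Matrix.mul_nonsing_inv _ hunit, kronPow_one]
  have h2 : kronPow d (fourierMat N)⁻¹ * kronPow d (fourierMat N) = 1 := by
    rw [← kronPow_mul, Matrix.nonsing_inv_mul _ hunit, kronPow_one]
  let U : (Matrix (Fin d → Fin N) (Fin d → Fin N) ℂ)ˣ := ⟨_, _, h1, h2⟩
  have hB : kronPow d (circAdj N r) * U.val
      = U.val * Matrix.diagonal fun m : Fin d → Fin N => ∏ s, (cCoef N k (m s) : ℂ) := by
    change kronPow d (circAdj N r) * kronPow d (fourierMat N) = kronPow d (fourierMat N) * _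
    rw [← kronPow_mul, circAdj_mul_fourierMat N hN r hr k hk hkN, kronPow_mul, kronPow_diagonal]
  have hA : gridAdj d N r = U.val * (Matrix.diagonal fun m : Fin d → Fin N =>
      (∏ s, (cCoef N k (m s) : ℂ)) - 1) * U⁻¹.val := by
    rw [Units.eq_mul_inv_iff_mul_eq, gridAdj_eq d N hd r hr, sub_mul, hB, one_mul,
      ← Matrix.diagonal_sub, mul_sub, Matrix.diagonal_one, mul_one]
  rw [hA, Matrix.charpoly_mul_comm, ← mul_assoc, Units.inv_mul, one_mul, Matrix.charpoly_diagonal]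

end
end
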